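/- A function f : [0,1] → ℝ is uniformly continuous on [0,1] if and only if f is induced by a uniformly continuous code of a continuous function. -/

import Mathlib

open Filter

/-- A regular sequence of rationals: `|r n - r (n+1)| ≤ 2^(-(n+1))`. -/
def Regular (r : ℕ → ℚ) : Prop := ∀ n : ℕ, |r n - r (n + 1)| ≤ 1 / 2 ^ (n + 1)

/-- The real number determined by a (regular, hence Cauchy) sequence of rationals. -/
noncomputable def rlim (r : ℕ → ℚ) : ℝ := limUnder atTop fun n => (r n : ℝ)

/-- `x` is a regular sequence representing a real number in the unit interval. -/
noncomputable def InUnit (x : ℕ → ℚ) : Prop := Regular x ∧ rlim x ∈ Set.Icc (0 : ℝ) 1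

/-- `triN s` : numbering of the nodes of the ternary tree:
`N(⟨⟩) = 1`, `N(s * ⟨i⟩) = 2 * N(s) + i - 1`. -/
def triN (s : List (Fin 3)) : ℕ := s.foldl (fun a i => 2 * a + i.val - 1) 1

/-- Initial segment of length `n` of `α`. -/
def seg3 (α : ℕ → Fin 3) (n : ℕ) : List (Fin 3) := List.ofFn fun i : Fin n => α i

/-- `Phi α` is the limit of the Cauchy sequence `x_α^n = 2^(-(n+1)) * N(ᾱ n)`. -/
noncomputable def Phi (α : ℕ → Fin 3) : ℝ :=
  limUnder atTop fun n => (triN (seg3 α n) : ℝ) / 2 ^ (n + 1)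

/-- `f : [0,1] → ℝ` has a continuous modulus: a family `g k` of pointwise continuous
functions on the underlying set of regular sequences in `[0,1]` such that
`|x - y| ≤ 2^(-(g k x))` implies `|f x - f y| ≤ 2^(-k)`. -/
def HasContModulus (f : ℝ → ℝ) : Prop :=
  ∃ g : ℕ → (ℕ → ℚ) → ℕ,
    (∀ (k : ℕ) (x y : ℕ → ℚ), InUnit x → InUnit y →
      |rlim x - rlim y| ≤ 1 / 2 ^ g k x → |f (rlim x) - f (rlim y)| ≤ 1 / 2 ^ k) ∧
    (∀ (k : ℕ) (x : ℕ → ℚ), InUnit x → ∃ n : ℕ, ∀ y : ℕ → ℚ, InUnit y →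
      (∀ i < n, x i = y i) → g k x = g k y)

/-- `f : [0,1] → ℝ` has a continuous ternary modulus: a family `g k` of pointwise
continuous functions on `{0,1,2}^ℕ` such that `|Φ α - x| ≤ 2^(-(g k α))` implies
`|f (Φ α) - f x| ≤ 2^(-k)`. -/
def HasContTernModulus (f : ℝ → ℝ) : Prop :=
  ∃ g : ℕ → (ℕ → Fin 3) → ℕ,
    (∀ (k : ℕ) (α : ℕ → Fin 3), ∀ x ∈ Set.Icc (0 : ℝ) 1,
      |Phi α - x| ≤ 1 / 2 ^ g k α → |f (Phi α) - f x| ≤ 1 / 2 ^ k) ∧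
    (∀ (k : ℕ) (α : ℕ → Fin 3), ∃ n : ℕ, ∀ β : ℕ → Fin 3,
      seg3 α n = seg3 β n → g k α = g k β)

/-- `f : [0,1] → ℝ` is uniformly continuous on the unit interval, with a modulus `ω`. -/
def UnifContOn (f : ℝ → ℝ) : Prop :=
  ∃ ω : ℕ → ℕ, ∀ k : ℕ, ∀ x ∈ Set.Icc (0 : ℝ) 1, ∀ y ∈ Set.Icc (0 : ℝ) 1,
    |x - y| ≤ 1 / 2 ^ ω k → |f x - f y| ≤ 1 / 2 ^ k

/-- The rational interval `I_s = [2^(-(|s|+1))·(N s - 1), 2^(-(|s|+1))·(N s + 1)]`. -/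
def Iseg (s : List (Fin 3)) : ℚ × ℚ :=
  (((triN s : ℚ) - 1) / 2 ^ (s.length + 1), ((triN s : ℚ) + 1) / 2 ^ (s.length + 1))

/-- `I ≈ J`: the rational intervals `I` and `J` overlap. -/
def approxI (I J : ℚ × ℚ) : Prop := J.1 ≤ I.2 ∧ I.1 ≤ J.2

/-- A code of a continuous function (Loeb). -/
def IsCode (φ : List (Fin 3) → Option (ℚ × ℚ)) : Prop :=
  (∀ (s : List (Fin 3)) (p q : ℚ), φ s = some (p, q) → p ≤ q) ∧
  (∀ (k : ℕ) (α : ℕ → Fin 3), ∃ (n : ℕ) (p q : ℚ),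
    φ (seg3 α n) = some (p, q) ∧ q - p ≤ 1 / 2 ^ k) ∧
  (∀ (s : List (Fin 3)) (I : ℚ × ℚ), φ s = some I → ∀ i : Fin 3,
    ∃ J : ℚ × ℚ, φ (s ++ [i]) = some J ∧ I.1 ≤ J.1 ∧ J.2 ≤ I.2) ∧
  (∀ (s t : List (Fin 3)) (I J : ℚ × ℚ), φ s = some I → φ t = some J →
    approxI (Iseg s) (Iseg t) → approxI I J)

/-- At stage `n`, the code `φ` produces along `α` an interval of length `≤ 2^(-k)`. -/
def goodAt (φ : List (Fin 3) → Option (ℚ × ℚ)) (α : ℕ → Fin 3) (k n : ℕ) : Prop :=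
  ∃ p q : ℚ, φ (seg3 α n) = some (p, q) ∧ q - p ≤ 1 / 2 ^ k

open Classical in
/-- `hIdx φ α k` is the least `n` such that `φ (ᾱ n)` is an interval of length
`≤ 2^(-k)` (and `0` if there is none). -/
noncomputable def hIdx (φ : List (Fin 3) → Option (ℚ × ℚ)) (α : ℕ → Fin 3) (k : ℕ) : ℕ :=
  if h : ∃ n, goodAt φ α k n then Nat.find h else 0

/-- Left endpoint of an optional rational interval. -/
def leftOf (o : Option (ℚ × ℚ)) : ℚ := (o.getD (0, 0)).1

/-- `f` is induced by the code `φ`: for every `α`, `f (Φ α)` is the limit of the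
left endpoints of the intervals `φ (ᾱ (h_n α))`. -/
def InducedBy (f : ℝ → ℝ) (φ : List (Fin 3) → Option (ℚ × ℚ)) : Prop :=
  ∀ α : ℕ → Fin 3,
    Tendsto (fun n => (leftOf (φ (seg3 α (hIdx φ α n))) : ℝ)) atTop (nhds (f (Phi α)))

/-- The code `φ` is uniformly continuous. -/
def UnifCode (φ : List (Fin 3) → Option (ℚ × ℚ)) : Prop :=
  ∀ k : ℕ, ∃ n : ℕ, ∀ α : ℕ → Fin 3,
    ∃ p q : ℚ, φ (seg3 α n) = some (p, q) ∧ q - p ≤ 1 / 2 ^ k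


lemma seg3_succ (α : ℕ → Fin 3) (n : ℕ) : seg3 α (n + 1) = seg3 α n ++ [α n] := by
  unfold seg3
  rw [List.ofFn_succ_last]
  simp

lemma seg3_length (α : ℕ → Fin 3) (n : ℕ) : (seg3 α n).length = n := by
  simp [seg3]

lemma triN_snoc (s : List (Fin 3)) (i : Fin 3) :
    triN (s ++ [i]) = 2 * triN s + i.val - 1 := by
  simp [triN]

lemma triN_bounds (s : List (Fin 3)) : 1 ≤ triN s ∧ triN s + 1 ≤ 2 ^ (s.length + 1) := by
  induction s using List.reverseRecOn with
  | nil => simp [triN]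
  | append_singleton s i ih =>
    rw [triN_snoc]
    have hi := i.isLt
    simp only [List.length_append, List.length_singleton]
    have h2 : 2 ^ (s.length + 1 + 1) = 2 * 2 ^ (s.length + 1) := by ring
    omega

lemma triN_snoc_real (s : List (Fin 3)) (i : Fin 3) :
    (triN (s ++ [i]) : ℝ) = 2 * triN s + (i.val : ℝ) - 1 := by
  have h := triN_bounds s
  have h1 : triN (s ++ [i]) + 1 = 2 * triN s + i.val := by
    rw [triN_snoc]; omega
  have h2 : ((triN (s ++ [i]) + 1 : ℕ) : ℝ) = ((2 * triN s + i.val : ℕ) : ℝ) := by rw [h1]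
  push_cast at h2
  linarith

/-- left endpoint -/
noncomputable def lo (s : List (Fin 3)) : ℝ := ((triN s : ℝ) - 1) / 2 ^ (s.length + 1)
/-- right endpoint -/
noncomputable def hi (s : List (Fin 3)) : ℝ := ((triN s : ℝ) + 1) / 2 ^ (s.length + 1)

lemma lo_cast (s : List (Fin 3)) : (((Iseg s).1 : ℚ) : ℝ) = lo s := by simp [Iseg, lo]
lemma hi_cast (s : List (Fin 3)) : (((Iseg s).2 : ℚ) : ℝ) = hi s := by simp [Iseg, hi]

lemma lo_nonneg (s : List (Fin 3)) : 0 ≤ lo s := by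
  have h : (1 : ℝ) ≤ triN s := by exact_mod_cast (triN_bounds s).1
  unfold lo
  apply div_nonneg
  · linarith
  · positivity

lemma hi_le_one (s : List (Fin 3)) : hi s ≤ 1 := by
  have h : (triN s + 1 : ℝ) ≤ 2 ^ (s.length + 1) := by exact_mod_cast (triN_bounds s).2
  unfold hi
  rw [div_le_one (by positivity)]
  exact h

lemma hi_sub_lo (s : List (Fin 3)) : hi s - lo s = 1 / 2 ^ s.length := by
  unfold hi lo
  rw [pow_succ]
  field_simp
  ring

lemma lo_le_hi (s : List (Fin 3)) : lo s ≤ hi s := by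
  have := hi_sub_lo s
  have h : (0 : ℝ) ≤ 1 / 2 ^ s.length := by positivity
  linarith

lemma lo_snoc (s : List (Fin 3)) (i : Fin 3) :
    lo (s ++ [i]) = lo s + (i.val : ℝ) / 2 ^ (s.length + 2) := by
  unfold lo
  rw [triN_snoc_real]
  simp only [List.length_append, List.length_singleton]
  rw [pow_succ _ (s.length + 1)]
  field_simp
  ring

lemma hi_snoc (s : List (Fin 3)) (i : Fin 3) :
    hi (s ++ [i]) = hi s - (2 - (i.val : ℝ)) / 2 ^ (s.length + 2) := by
  unfold hi
  rw [triN_snoc_real]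
  simp only [List.length_append, List.length_singleton]
  rw [pow_succ _ (s.length + 1)]
  field_simp
  ring

lemma lo_le_snoc (s : List (Fin 3)) (i : Fin 3) : lo s ≤ lo (s ++ [i]) := by
  rw [lo_snoc]
  have : (0 : ℝ) ≤ (i.val : ℝ) / 2 ^ (s.length + 2) := by positivity
  linarith

lemma hi_snoc_le (s : List (Fin 3)) (i : Fin 3) : hi (s ++ [i]) ≤ hi s := by
  rw [hi_snoc]
  have h : (i.val : ℝ) ≤ 2 := by exact_mod_cast Nat.lt_succ_iff.mp i.isLt
  have : (0 : ℝ) ≤ (2 - (i.val : ℝ)) / 2 ^ (s.length + 2) := by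
    apply div_nonneg
    · linarith
    · positivity
  linarith

lemma tend_half : Tendsto (fun n : ℕ => (1 : ℝ) / 2 ^ n) atTop (nhds 0) := by
  have := tendsto_pow_atTop_nhds_zero_of_lt_one (r := (1 / 2 : ℝ)) (by norm_num) (by norm_num)
  simpa [one_div] using this

lemma Phi_spec (α : ℕ → Fin 3) :
    Tendsto (fun n => lo (seg3 α n)) atTop (nhds (Phi α)) ∧
    (∀ n, lo (seg3 α n) ≤ Phi α ∧ Phi α ≤ hi (seg3 α n)) := by
  have hm : Monotone fun n => lo (seg3 α n) :=
    monotone_nat_of_le_succ fun n => by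
      rw [seg3_succ]; exact lo_le_snoc _ _
  have ha : Antitone fun n => hi (seg3 α n) :=
    antitone_nat_of_succ_le fun n => by
      rw [seg3_succ]; exact hi_snoc_le _ _
  have hb : BddAbove (Set.range fun n => lo (seg3 α n)) := by
    refine ⟨1, ?_⟩
    rintro _ ⟨n, rfl⟩
    exact (lo_le_hi _).trans (hi_le_one _)
  have ht := tendsto_atTop_ciSup hm hb
  set L := ⨆ n, lo (seg3 α n) with hL
  have e : ∀ n, hi (seg3 α n) = lo (seg3 α n) + 1 / 2 ^ n := fun n => by
    have := hi_sub_lo (seg3 α n)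
    rw [seg3_length] at this
    linarith
  have ht2 : Tendsto (fun n => hi (seg3 α n)) atTop (nhds L) := by
    simp_rw [e]
    simpa using ht.add tend_half
  have ht3 : Tendsto (fun n => (triN (seg3 α n) : ℝ) / 2 ^ (n + 1)) atTop (nhds L) := by
    have : (fun n => (triN (seg3 α n) : ℝ) / 2 ^ (n + 1))
        = fun n => (lo (seg3 α n) + hi (seg3 α n)) / 2 := by
      funext n
      unfold lo hi
      rw [seg3_length]
      ring
    rw [this]
    have h := (ht.add ht2).div_const 2
    simpa using h
  have hP : Phi α = L := ht3.limUnder_eq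
  rw [hP]
  exact ⟨ht, fun n => ⟨hm.ge_of_tendsto ht n, ha.le_of_tendsto ht2 n⟩⟩

lemma Phi_mem (α : ℕ → Fin 3) : Phi α ∈ Set.Icc (0 : ℝ) 1 :=
  ⟨(lo_nonneg _).trans ((Phi_spec α).2 0).1, ((Phi_spec α).2 0).2.trans (hi_le_one _)⟩

open Classical in
/-- greedy expansion -/
noncomputable def greedy (x : ℝ) : ℕ → List (Fin 3)
  | 0 => []
  | n + 1 => greedy x n ++ [if x ≤ hi (greedy x n ++ [0]) then 0 else 2]

open Classical in
/-- digits of the greedy expansion -/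
noncomputable def dig (x : ℝ) (n : ℕ) : Fin 3 := if x ≤ hi (greedy x n ++ [0]) then 0 else 2

lemma seg3_dig (x : ℝ) (n : ℕ) : seg3 (dig x) n = greedy x n := by
  induction n with
  | zero => simp [seg3, greedy]
  | succ n ih => rw [seg3_succ, ih]; rfl

lemma greedy_mem (x : ℝ) (hx : x ∈ Set.Icc (0 : ℝ) 1) (n : ℕ) :
    lo (greedy x n) ≤ x ∧ x ≤ hi (greedy x n) := by
  induction n with
  | zero =>
    have h1 : lo (greedy x 0) = 0 := by simp [lo, greedy, triN]
    have h2 : hi (greedy x 0) = 1 := by norm_num [hi, greedy, triN]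
    rw [h1, h2]; exact hx
  | succ n ih =>
    rw [greedy]
    split_ifs with h
    · refine ⟨?_, h⟩
      rw [lo_snoc]; simpa using ih.1
    · push Not at h
      constructor
      · rw [lo_snoc]
        rw [hi_snoc] at h
        have h1 := hi_sub_lo (greedy x n)
        have h3 : (1 : ℝ) / 2 ^ (greedy x n).length = 4 / 2 ^ ((greedy x n).length + 2) := by
          rw [pow_add]; field_simp; norm_num
        have h4 : (4 : ℝ) / 2 ^ ((greedy x n).length + 2)
          = 2 / 2 ^ ((greedy x n).length + 2) + 2 / 2 ^ ((greedy x n).length + 2) := by ring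
        simp at h ⊢
        linarith
      · rw [hi_snoc]; simpa using ih.2

lemma Phi_dig (x : ℝ) (hx : x ∈ Set.Icc (0 : ℝ) 1) : Phi (dig x) = x := by
  have h1 := (Phi_spec (dig x)).1
  refine tendsto_nhds_unique h1 ?_
  have hx2 : Tendsto (fun n : ℕ => x - 1 / 2 ^ n) atTop (nhds x) := by
    simpa using tendsto_const_nhds.sub tend_half
  refine tendsto_of_tendsto_of_tendsto_of_le_of_le hx2 tendsto_const_nhds ?_ ?_
  · intro n
    have h := greedy_mem x hx n
    have h2 := hi_sub_lo (seg3 (dig x) n)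
    rw [seg3_length] at h2
    rw [← seg3_dig] at h
    show x - 1 / 2 ^ n ≤ lo (seg3 (dig x) n)
    linarith [h.2]
  · intro n
    show lo (seg3 (dig x) n) ≤ x
    rw [seg3_dig]
    exact (greedy_mem x hx n).1

lemma overlap_of_close (s t : List (Fin 3)) (n : ℕ) (hs : s.length = n) (ht : t.length = n)
    (x y : ℝ) (hx : x ≤ hi s) (hy : lo t ≤ y) (h : y - x ≤ 1 / 2 ^ (n + 2)) :
    (Iseg t).1 ≤ (Iseg s).2 := by
  have h1 : lo t - hi s < 1 / 2 ^ (n + 1) := by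
    have : (1 : ℝ) / 2 ^ (n + 2) < 1 / 2 ^ (n + 1) := by
      apply one_div_lt_one_div_of_lt (by positivity)
      exact pow_lt_pow_right₀ (by norm_num) (by omega)
    linarith
  have h2 : lo t ≤ hi s := by
    unfold lo hi at *
    rw [hs, ht] at *
    rw [← sub_div, div_lt_div_iff_of_pos_right (by positivity)] at h1
    apply div_le_div_of_nonneg_right _ (by positivity)
    have h3 : (triN t : ℝ) < (triN s + 3 : ℕ) := by push_cast; linarith
    have h4 : triN t ≤ triN s + 2 := by
      have := Nat.cast_lt.mp h3
      omega
    have h5 : (triN t : ℝ) ≤ (triN s + 2 : ℕ) := by exact_mod_cast h4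
    push_cast at h5
    linarith
  rw [← lo_cast, ← hi_cast] at h2
  exact_mod_cast h2

lemma hIdx_spec {φ : List (Fin 3) → Option (ℚ × ℚ)} (α : ℕ → Fin 3) (k : ℕ)
    (h : ∃ n, goodAt φ α k n) : goodAt φ α k (hIdx φ α k) := by
  classical
  unfold hIdx
  rw [dif_pos h]
  convert Nat.find_spec h

lemma nested {φ : List (Fin 3) → Option (ℚ × ℚ)} (hφ : IsCode φ) (α : ℕ → Fin 3) (m d : ℕ)
    (I : ℚ × ℚ) (h : φ (seg3 α m) = some I) :
    ∃ J, φ (seg3 α (m + d)) = some J ∧ I.1 ≤ J.1 ∧ J.2 ≤ I.2 := by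
  induction d with
  | zero => exact ⟨I, h, le_rfl, le_rfl⟩
  | succ d ih =>
    obtain ⟨J, hJ, h1, h2⟩ := ih
    obtain ⟨K, hK, h3, h4⟩ := hφ.2.2.1 _ J hJ (α (m + d))
    refine ⟨K, ?_, h1.trans h3, h4.trans h2⟩
    rw [← add_assoc, seg3_succ]; exact hK

lemma induced_mem {f : ℝ → ℝ} {φ : List (Fin 3) → Option (ℚ × ℚ)} (hφ : IsCode φ)
    (hf : InducedBy f φ) (α : ℕ → Fin 3) (m : ℕ) (I : ℚ × ℚ) (h : φ (seg3 α m) = some I) :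
    (I.1 : ℝ) ≤ f (Phi α) ∧ f (Phi α) ≤ I.2 := by
  have key : ∀ n : ℕ, I.1 - 1 / 2 ^ n ≤ leftOf (φ (seg3 α (hIdx φ α n))) ∧
      leftOf (φ (seg3 α (hIdx φ α n))) ≤ I.2 := by
    intro n
    have hpos : (0 : ℚ) ≤ 1 / 2 ^ n := by positivity
    obtain ⟨p, q, h1, h2⟩ := hIdx_spec (φ := φ) α n (hφ.2.1 n α)
    have hpq := hφ.1 _ _ _ h1
    have hI := hφ.1 _ I.1 I.2 h
    have hl : leftOf (φ (seg3 α (hIdx φ α n))) = p := by rw [h1]; rfl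
    rw [hl]
    rcases le_total m (hIdx φ α n) with hle | hle
    · obtain ⟨d, hd⟩ := Nat.exists_eq_add_of_le hle
      obtain ⟨J, hJ, h3, h4⟩ := nested hφ α m d I h
      rw [← hd, h1] at hJ
      obtain rfl := Option.some.inj hJ
      simp at h3 h4
      constructor <;> linarith
    · obtain ⟨d, hd⟩ := Nat.exists_eq_add_of_le hle
      obtain ⟨J, hJ, h3, h4⟩ := nested hφ α _ d _ h1
      rw [← hd, h] at hJ
      obtain rfl := Option.some.inj hJ
      simp at h3 h4
      constructor <;> linarith
  have ht := hf α
  constructor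
  · have hx2 : Tendsto (fun n : ℕ => (I.1 : ℝ) - 1 / 2 ^ n) atTop (nhds I.1) := by
      simpa using tendsto_const_nhds.sub tend_half
    refine le_of_tendsto_of_tendsto' hx2 ht fun n => ?_
    have := (key n).1
    have h2 : ((I.1 - 1 / 2 ^ n : ℚ) : ℝ) ≤ leftOf (φ (seg3 α (hIdx φ α n))) := by
      exact_mod_cast this
    push_cast at h2
    exact h2
  · refine le_of_tendsto' ht fun n => ?_
    exact_mod_cast (key n).2

lemma bwd (f : ℝ → ℝ) (φ : List (Fin 3) → Option (ℚ × ℚ)) (hφ : IsCode φ) (hu : UnifCode φ)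
    (hf : InducedBy f φ) : UnifContOn f := by
  choose n hn using hu
  refine ⟨fun k => n (k + 1) + 2, fun k x hx y hy hxy => ?_⟩
  obtain ⟨p, q, h1, h2⟩ := hn (k + 1) (dig x)
  obtain ⟨p', q', h1', h2'⟩ := hn (k + 1) (dig y)
  have hx1 := induced_mem hφ hf _ _ _ h1
  have hy1 := induced_mem hφ hf _ _ _ h1'
  rw [Phi_dig x hx] at hx1
  rw [Phi_dig y hy] at hy1
  have hxs := (Phi_spec (dig x)).2 (n (k + 1))
  have hys := (Phi_spec (dig y)).2 (n (k + 1))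
  rw [Phi_dig x hx] at hxs
  rw [Phi_dig y hy] at hys
  have hab := abs_le.mp hxy
  have o1 := overlap_of_close _ _ _ (seg3_length (dig x) (n (k + 1)))
    (seg3_length (dig y) (n (k + 1))) x y hxs.2 hys.1 (by linarith [hab.1])
  have o2 := overlap_of_close _ _ _ (seg3_length (dig y) (n (k + 1)))
    (seg3_length (dig x) (n (k + 1))) y x hys.2 hxs.1 (by linarith [hab.2])
  obtain ⟨a1, a2⟩ := hφ.2.2.2 _ _ _ _ h1 h1' ⟨o1, o2⟩
  have r1 : ((q - p : ℚ) : ℝ) ≤ ((1 / 2 ^ (k + 1) : ℚ) : ℝ) := by exact_mod_cast h2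
  have r2 : ((q' - p' : ℚ) : ℝ) ≤ ((1 / 2 ^ (k + 1) : ℚ) : ℝ) := by exact_mod_cast h2'
  have b1 : (p' : ℝ) ≤ q := by exact_mod_cast a1
  have b2 : (p : ℝ) ≤ q' := by exact_mod_cast a2
  push_cast at r1 r2
  have hk : (1 : ℝ) / 2 ^ k = 1 / 2 ^ (k + 1) + 1 / 2 ^ (k + 1) := by
    rw [pow_succ]; field_simp; norm_num
  simp only at hx1 hy1
  rw [abs_le]
  constructor <;> linarith [hx1.1, hx1.2, hy1.1, hy1.2]

lemma UnifContOn.cont {f : ℝ → ℝ} (h : UnifContOn f) : ContinuousOn f (Set.Icc 0 1) := by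
  obtain ⟨ω, hω⟩ := h
  rw [Metric.continuousOn_iff]
  intro x hx ε hε
  obtain ⟨k, hk⟩ := ((tend_half.eventually (gt_mem_nhds hε))).exists
  refine ⟨1 / 2 ^ ω k, by positivity, fun y hy hd => ?_⟩
  rw [Real.dist_eq] at hd ⊢
  exact (hω k y hy x hx hd.le).trans_lt hk

lemma fwd (f : ℝ → ℝ) (h : UnifContOn f) :
    ∃ φ : List (Fin 3) → Option (ℚ × ℚ), IsCode φ ∧ UnifCode φ ∧ InducedBy f φ := by
  have hc := h.cont
  obtain ⟨ω, hω⟩ := h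
  have hsub : ∀ s, Set.Icc (lo s) (hi s) ⊆ Set.Icc 0 1 := fun s =>
    Set.Icc_subset_Icc (lo_nonneg s) (hi_le_one s)
  have hne : ∀ s, (Set.Icc (lo s) (hi s)).Nonempty := fun s => Set.nonempty_Icc.mpr (lo_le_hi s)
  -- minimum and maximum points
  have hmin : ∀ s, ∃ x ∈ Set.Icc (lo s) (hi s), ∀ y ∈ Set.Icc (lo s) (hi s), f x ≤ f y :=
    fun s => isCompact_Icc.exists_isMinOn (hne s) (hc.mono (hsub s))
  have hmax : ∀ s, ∃ x ∈ Set.Icc (lo s) (hi s), ∀ y ∈ Set.Icc (lo s) (hi s), f y ≤ f x :=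
    fun s => isCompact_Icc.exists_isMaxOn (hne s) (hc.mono (hsub s))
  choose a ha1 ha2 using hmin
  choose b hb1 hb2 using hmax
  have hlt : ∀ n : ℕ, (1 : ℝ) / 2 ^ (n + 1) < 1 / 2 ^ n := fun n => by
    apply one_div_lt_one_div_of_lt (by positivity)
    exact pow_lt_pow_right₀ (by norm_num) (by omega)
  have hp : ∀ s : List (Fin 3), ∃ p : ℚ, f (a s) - 1 / 2 ^ s.length < p ∧
      (p : ℝ) < f (a s) - 1 / 2 ^ (s.length + 1) := fun s =>
    exists_rat_btwn (by linarith [hlt s.length])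
  have hq : ∀ s : List (Fin 3), ∃ q : ℚ, f (b s) + 1 / 2 ^ (s.length + 1) < q ∧
      (q : ℝ) < f (b s) + 1 / 2 ^ s.length := fun s =>
    exists_rat_btwn (by linarith [hlt s.length])
  choose p hp1 hp2 using hp
  choose q hq1 hq2 using hq
  have hpos : ∀ n : ℕ, (0 : ℝ) < 1 / 2 ^ n := fun n => by positivity
  have mem : ∀ s, ∀ x ∈ Set.Icc (lo s) (hi s), (p s : ℝ) ≤ f x ∧ f x ≤ q s := fun s x hx =>
    ⟨by linarith [ha2 s x hx, hp2 s, hpos (s.length + 1)],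
     by linarith [hb2 s x hx, hq1 s, hpos (s.length + 1)]⟩
  have hchild : ∀ s i, Set.Icc (lo (s ++ [i])) (hi (s ++ [i])) ⊆ Set.Icc (lo s) (hi s) :=
    fun s i => Set.Icc_subset_Icc (lo_le_snoc s i) (hi_snoc_le s i)
  have hunif : UnifCode fun s => some (p s, q s) := by
    intro k
    refine ⟨max (ω (k + 1)) (k + 2), fun α => ⟨_, _, rfl, ?_⟩⟩
    set m := max (ω (k + 1)) (k + 2) with hm
    set s := seg3 α m with hs
    have hl : s.length = m := seg3_length _ _
    have h1 : |f (b s) - f (a s)| ≤ 1 / 2 ^ (k + 1) := by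
      refine hω (k + 1) _ (hsub s (hb1 s)) _ (hsub s (ha1 s)) ?_
      have h2 : (1 : ℝ) / 2 ^ m ≤ 1 / 2 ^ ω (k + 1) := by
        apply one_div_le_one_div_of_le (by positivity)
        exact pow_le_pow_right₀ (by norm_num) (le_max_left _ _)
      have h3 := hi_sub_lo s
      rw [hl] at h3
      have := ha1 s
      have := hb1 s
      simp only [Set.mem_Icc] at *
      rw [abs_le]
      constructor <;> linarith
    have h2 : (1 : ℝ) / 2 ^ m ≤ 1 / 2 ^ (k + 2) := by
      apply one_div_le_one_div_of_le (by positivity)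
      exact pow_le_pow_right₀ (by norm_num) (le_max_right _ _)
    have h3 := hp1 s
    have h4 := hq2 s
    rw [hl] at h3 h4
    have h5 := (abs_le.mp h1).2
    have h6 : (1 : ℝ) / 2 ^ k = 1 / 2 ^ (k + 1) + 1 / 2 ^ (k + 2) + 1 / 2 ^ (k + 2) := by
      rw [pow_succ, pow_add]; field_simp; norm_num
    have h7 : ((q s - p s : ℚ) : ℝ) ≤ ((1 / 2 ^ k : ℚ) : ℝ) := by
      push_cast
      linarith
    exact_mod_cast h7
  refine ⟨fun s => some (p s, q s), ⟨?_, ?_, ?_, ?_⟩, hunif, ?_⟩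
  · intro s p' q' hs
    simp only [Option.some.injEq, Prod.mk.injEq] at hs
    obtain ⟨rfl, rfl⟩ := hs
    have := mem s (a s) (ha1 s)
    exact_mod_cast this.1.trans this.2
  · intro k α
    obtain ⟨n, hn⟩ := hunif k
    exact ⟨n, hn α⟩
  · intro s I hs i
    obtain rfl := Option.some.inj hs
    refine ⟨_, rfl, ?_, ?_⟩
    · have h1 := hp1 (s ++ [i])
      have h2 := hp2 s
      have h3 := ha2 s _ (hchild s i (ha1 (s ++ [i])))
      simp only [List.length_append, List.length_singleton] at h1
      have h4 : (p s : ℝ) ≤ p (s ++ [i]) := by linarith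
      exact_mod_cast h4
    · have h1 := hq2 (s ++ [i])
      have h2 := hq1 s
      have h3 := hb2 s _ (hchild s i (hb1 (s ++ [i])))
      simp only [List.length_append, List.length_singleton] at h1
      have h4 : (q (s ++ [i]) : ℝ) ≤ q s := by linarith
      exact_mod_cast h4
  · intro s t I J hs ht hst
    obtain rfl := Option.some.inj hs
    obtain rfl := Option.some.inj ht
    have o1 : lo t ≤ hi s := by
      rw [← lo_cast, ← hi_cast]; exact_mod_cast hst.1
    have o2 : lo s ≤ hi t := by
      rw [← lo_cast, ← hi_cast]; exact_mod_cast hst.2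
    have m1 := mem s (max (lo s) (lo t)) ⟨le_max_left _ _, max_le (lo_le_hi s) o1⟩
    have m2 := mem t (max (lo s) (lo t)) ⟨le_max_right _ _, max_le o2 (lo_le_hi t)⟩
    constructor
    · exact_mod_cast m2.1.trans m1.2
    · exact_mod_cast m1.1.trans m2.2
  · intro α
    have hx2 : Tendsto (fun n : ℕ => f (Phi α) - 1 / 2 ^ n) atTop (nhds (f (Phi α))) := by
      simpa using tendsto_const_nhds.sub tend_half
    have key : ∀ n : ℕ, ∃ s : List (Fin 3),
        seg3 α (hIdx (fun s => some (p s, q s)) α n) = s ∧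
        (p s : ℝ) ≤ f (Phi α) ∧ f (Phi α) - 1 / 2 ^ n ≤ p s := by
      intro n
      refine ⟨_, rfl, ?_⟩
      obtain ⟨m, hm⟩ := hunif n
      obtain ⟨p', q', h1, h2⟩ := hIdx_spec (φ := fun s => some (p s, q s)) α n ⟨m, hm α⟩
      have hmm := mem _ _ ((Phi_spec α).2 (hIdx (fun s => some (p s, q s)) α n))
      simp only [Option.some.injEq, Prod.mk.injEq] at h1
      obtain ⟨rfl, rfl⟩ := h1
      refine ⟨hmm.1, ?_⟩
      have h3 := (Rat.cast_le (K := ℝ)).mpr h2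
      push_cast at h3
      linarith [hmm.2]
    refine tendsto_of_tendsto_of_tendsto_of_le_of_le hx2 tendsto_const_nhds ?_ ?_
    · intro n
      obtain ⟨s, hs, h1, h2⟩ := key n
      simp only [hs]
      exact h2
    · intro n
      obtain ⟨s, hs, h1, h2⟩ := key n
      simp only [hs]
      exact h1

theorem stmt19 (f : ℝ → ℝ) :
    UnifContOn f ↔
      ∃ φ : List (Fin 3) → Option (ℚ × ℚ), IsCode φ ∧ UnifCode φ ∧ InducedBy f φ :=
  ⟨fwd f, fun ⟨φ, h1, h2, h3⟩ => bwd f φ h1 h2 h3⟩
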